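/- The double series ∑_{m,n≥0, m≡n (mod 3)} 1/((n+1/2)(m+n+1)²) converges and equals (7/54) ζ(3) + (5π/(3√3)) L(2, χ₃), where χ₃ is the nontrivial Dirichlet character modulo 3. -/

import Mathlib

open scoped BigOperators Real

/-- The nontrivial (quadratic) Dirichlet character of conductor 3 (real-valued). -/
noncomputable def chi3 (n : ℕ) : ℝ :=
  if n % 3 = 1 then 1 else if n % 3 = 2 then -1 else 0

/-- The partial fraction expansion of the cotangent at a real non-integer. -/
lemma hasSum_real_cot {x : ℝ} (hx : ∀ k : ℤ, x ≠ k) :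
    HasSum (fun n : ℕ => 1 / (x - (n + 1)) + 1 / (x + (n + 1)))
      (π * (Real.cos (π * x) / Real.sin (π * x)) - 1 / x) := by
  have hz : (x : ℂ) ∈ Complex.integerComplement := by
    rintro ⟨k, hk⟩
    exact hx k (by exact_mod_cast hk.symm)
  have h := (summable_cotTerm hz).hasSum
  have e : ∑' n : ℕ, cotTerm (x : ℂ) n = π * Complex.cot (π * x) - 1 / x :=
    (cot_series_rep' hz).symm
  rw [e, Complex.cot] at h
  rw [← Complex.hasSum_ofReal]
  push_cast
  exact h

/-- The sum of `1 / ((x + k) * (y + k))` over the integers, in terms of cotangents. -/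
lemma mul_tsum_int_one_div_mul {x y : ℝ} (hx : ∀ k : ℤ, x ≠ k) (hy : ∀ k : ℤ, y ≠ k)
    (hs : Summable (fun k : ℤ => 1 / ((x + k) * (y + k)))) :
    (y - x) * ∑' k : ℤ, 1 / ((x + k) * (y + k)) =
      π * (Real.cos (π * x) / Real.sin (π * x)) - π * (Real.cos (π * y) / Real.sin (π * y)) := by
  have h1 := hs.hasSum.nat_add_neg
  rw [← hasSum_nat_add_iff' 1] at h1
  have h2 := ((hasSum_real_cot hx).sub (hasSum_real_cot hy))
  have h3 := (h1.mul_left (y - x)).unique (h2.congr_fun ?_)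
  · have hx0 : x ≠ 0 := by simpa using hx 0
    have hy0 : y ≠ 0 := by simpa using hy 0
    simp only [Finset.sum_range_one, Int.cast_zero, Nat.cast_zero, neg_zero, add_zero] at h3
    have h4 : (y - x) * (1 / (x * y)) = 1 / x - 1 / y := by field_simp
    linarith
  · intro n
    have a1 : x - (n + 1) ≠ 0 := sub_ne_zero.2 (by simpa using hx (n + 1))
    have a2 : y - (n + 1) ≠ 0 := sub_ne_zero.2 (by simpa using hy (n + 1))
    have a3 : x + (n + 1) ≠ 0 := fun h => hx (-(n + 1)) (by push_cast; linarith)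
    have a4 : y + (n + 1) ≠ 0 := fun h => hy (-(n + 1)) (by push_cast; linarith)
    have a5 : x + -(n + 1) ≠ 0 := a1
    have a6 : y + -(n + 1) ≠ 0 := a2
    push_cast
    field_simp
    ring

/-- At odd `c` the cotangent of `π * c / 2` vanishes, which sums this series; the vanishing
denominator at `k = -c` contributes `0`. -/
lemma tsum_int_one_div_odd_mul {c : ℕ} (hc : Odd c)
    (hs : Summable (fun k : ℤ => 1 / (((c : ℝ) + 2 * k) * (c + k)))) :
    ∑' k : ℤ, 1 / (((c : ℝ) + 2 * k) * (c + k)) = 2 / (c : ℝ) ^ 2 := by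
  obtain ⟨d, rfl⟩ := hc
  set c : ℕ := 2 * d + 1 with hcd
  have hc0 : (c : ℝ) ≠ 0 := by positivity
  have hodd : ∀ k : ℤ, (c : ℝ) - 2 * k ≠ 0 := by
    intro k h
    have : (c : ℤ) = 2 * k := by exact_mod_cast sub_eq_zero.1 h
    omega
  have hx : ∀ k : ℤ, (c : ℝ) / 2 ≠ k := fun k h => hodd k (by linarith)
  have hcos : Real.cos (π * ((c : ℝ) / 2)) = 0 := by
    rw [Real.cos_eq_zero_iff]
    exact ⟨d, by simp [hcd]; ring⟩
  have h2 := hasSum_real_cot hx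
  rw [hcos] at h2
  let s : ℤ ≃ ℤ := Equiv.subRight (c : ℤ)
  rw [← s.tsum_eq]
  have hs' := (s.summable_iff.2 hs)
  have h1 := hs'.hasSum.nat_add_neg
  rw [← hasSum_nat_add_iff' 1] at h1
  have h3 := h1.unique ((h2.mul_left (-1 / (c : ℝ))).congr_fun ?_)
  · simp [s] at h3
    refine (tsum_congr fun b => ?_).trans (h3.trans ?_)
    · simp only [s, Equiv.subRight_apply]
      push_cast
      rw [add_sub_cancel, one_div, mul_inv, mul_comm]
    · field_simp
  · intro n
    have a1 := hodd (n + 1)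
    push_cast at a1
    have a4 : (n : ℝ) + 1 ≠ 0 := by positivity
    have a7 : (c : ℝ) + 2 * (n + 1) ≠ 0 := by positivity
    simp only [s, Function.comp, Equiv.subRight_apply]
    push_cast
    have e1 : (c : ℝ) + 2 * (n + 1 - c) = -(c - 2 * (n + 1)) := by ring
    have e2 : (c : ℝ) + 2 * (-(n + 1) - c) = -(c + 2 * (n + 1)) := by ring
    have e3 : (c : ℝ) + (n + 1 - c) = n + 1 := by ring
    have e4 : (c : ℝ) + (-(n + 1) - c) = -(n + 1) := by ring
    have e5 : (c : ℝ) / 2 - (n + 1) = (c - 2 * (n + 1)) / 2 := by ring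
    have e6 : (c : ℝ) / 2 + (n + 1) = (c + 2 * (n + 1)) / 2 := by ring
    rw [e1, e2, e3, e4, e5, e6]
    field_simp
    ring

lemma one_div_mul_three_le {x y z : ℝ} (hx : 0 ≤ x) (hy : 0 ≤ y) (hz : 0 ≤ z) :
    1 / (x * y * z) ≤ x ^ (-(3 / 2) : ℝ) * y ^ (-(3 / 2) : ℝ)
      + x ^ (-(3 / 2) : ℝ) * z ^ (-(3 / 2) : ℝ) + y ^ (-(3 / 2) : ℝ) * z ^ (-(3 / 2) : ℝ) := by
  have key : ∀ t : ℝ, 0 ≤ t → ∃ u : ℝ, 0 ≤ u ∧ t ^ (-(3 / 2) : ℝ) = u ^ 3 ∧ t⁻¹ = u ^ 2 := by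
    intro t ht
    refine ⟨t ^ (-(1 / 2) : ℝ), by positivity, ?_, ?_⟩
    · rw [← Real.rpow_mul_natCast ht]; norm_num
    · rw [← Real.rpow_mul_natCast ht]; norm_num [Real.rpow_neg_one]
  obtain ⟨u, hu, hu3, hu2⟩ := key x hx
  obtain ⟨v, hv, hv3, hv2⟩ := key y hy
  obtain ⟨w, hw, hw3, hw2⟩ := key z hz
  rw [one_div, mul_inv, mul_inv, hu3, hv3, hw3, hu2, hv2, hw2]
  have amgm : ∀ p q r : ℝ, 0 ≤ p → 0 ≤ q → 0 ≤ r → p * q * r ≤ p ^ 3 + q ^ 3 + r ^ 3 := by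
    intro p q r hp hq hr
    have h1 : 0 ≤ (p + q + r) * ((p - q) ^ 2 + (q - r) ^ 2 + (p - r) ^ 2) := by positivity
    have h2 : 0 ≤ p * q * r := by positivity
    nlinarith
  have := amgm (u * v) (u * w) (v * w) (by positivity) (by positivity) (by positivity)
  nlinarith

/-- The Tornheim series over all pairs of integers converges absolutely. -/
lemma summable_tornheim_int :
    Summable (fun p : ℤ × ℤ => 1 / ((p.1 : ℝ) * p.2 * (p.1 + p.2))) := by
  have h0 : Summable (fun k : ℤ => |(k : ℝ)| ^ (-(3 / 2) : ℝ)) :=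
    Real.summable_abs_int_rpow (by norm_num)
  have h1 : Summable (fun p : ℤ × ℤ =>
      |(p.1 : ℝ)| ^ (-(3 / 2) : ℝ) * |(p.2 : ℝ)| ^ (-(3 / 2) : ℝ)) :=
    h0.mul_of_nonneg h0 (fun _ => by positivity) (fun _ => by positivity)
  have h2 : Summable (fun p : ℤ × ℤ =>
      |(p.1 : ℝ)| ^ (-(3 / 2) : ℝ) * |((p.1 : ℝ) + p.2)| ^ (-(3 / 2) : ℝ)) := by
    have hi : Function.Injective (fun p : ℤ × ℤ => (p.1, p.1 + p.2)) := by
      rintro ⟨a, b⟩ ⟨c, d⟩ h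
      simp at h ⊢
      omega
    simpa [Function.comp_def] using h1.comp_injective hi
  have h3 : Summable (fun p : ℤ × ℤ =>
      |(p.2 : ℝ)| ^ (-(3 / 2) : ℝ) * |((p.1 : ℝ) + p.2)| ^ (-(3 / 2) : ℝ)) := by
    have hi : Function.Injective (fun p : ℤ × ℤ => (p.2, p.1 + p.2)) := by
      rintro ⟨a, b⟩ ⟨c, d⟩ h
      simp at h ⊢
      omega
    simpa [Function.comp_def] using h1.comp_injective hi
  refine Summable.of_norm_bounded ((h1.add h2).add h3) (fun p => ?_)
  rw [norm_div, norm_mul, norm_mul, norm_one]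
  exact one_div_mul_three_le (abs_nonneg _) (abs_nonneg _) (abs_nonneg _)

/-- The Tornheim summand at the odd integers `2 * n + 1` and `2 * m + 1`, restricted to pairs that
are congruent modulo three. -/
noncomputable def oddTornheim (n : ℕ) (m : ℤ) : ℝ :=
  if ((n : ℤ) - m) % 3 = 0 then 1 / ((2 * (n : ℝ) + 1) * (2 * m + 1) * (2 * n + 2 * m + 2)) else 0

lemma summable_oddTornheim : Summable (fun p : ℕ × ℤ => oddTornheim p.1 p.2) := by
  have hi : Function.Injective (fun p : ℕ × ℤ => ((2 * p.1 + 1 : ℤ), 2 * p.2 + 1)) := by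
    rintro ⟨a, b⟩ ⟨c, d⟩ h
    simp at h ⊢
    omega
  have h := summable_tornheim_int.comp_injective hi
  refine Summable.of_norm_bounded h.norm (fun p => ?_)
  unfold oddTornheim
  split_ifs
  · apply le_of_eq
    simp only [Function.comp]
    push_cast
    ring_nf
  · simp only [norm_zero]
    exact norm_nonneg _

lemma tsum_oddTornheim_neg :
    ∑' p : ℕ × ℕ, oddTornheim p.1 (-((p.2 : ℤ) + 1)) = 0 := by
  have h : ∑' p : ℕ × ℕ, oddTornheim p.1 (-((p.2 : ℤ) + 1)) =
      ∑' p : ℕ × ℕ, -oddTornheim p.1 (-((p.2 : ℤ) + 1)) := by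
    rw [← (Equiv.prodComm ℕ ℕ).tsum_eq]
    refine tsum_congr fun p => ?_
    simp only [Equiv.prodComm_apply, Prod.fst_swap, Prod.snd_swap, oddTornheim]
    have : ((p.2 : ℤ) - -((p.1 : ℤ) + 1)) % 3 = 0 ↔ ((p.1 : ℤ) - -((p.2 : ℤ) + 1)) % 3 = 0 := by
      omega
    simp only [this]
    split_ifs
    · push_cast
      rw [← one_div_neg_eq_neg_one_div]
      ring_nf
    · simp
  rw [tsum_neg] at h
  linarith

lemma summable_oddTornheim_nat : Summable (fun p : ℕ × ℕ => oddTornheim p.1 p.2) := by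
  have hi : Function.Injective (fun p : ℕ × ℕ => (p.1, (p.2 : ℤ))) := by
    rintro ⟨a, b⟩ ⟨c, d⟩ h
    simpa using h
  simpa only [Function.comp_def] using summable_oddTornheim.comp_injective hi

/-- The part of the series with negative second index cancels by antisymmetry. -/
lemma tsum_oddTornheim_nat :
    ∑' p : ℕ × ℕ, oddTornheim p.1 p.2 = ∑' n : ℕ, ∑' m : ℤ, oddTornheim n m := by
  have hi : Function.Injective (fun p : ℕ × ℕ => (p.1, -((p.2 : ℤ) + 1))) := by
    rintro ⟨a, b⟩ ⟨c, d⟩ h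
    simpa using h
  have h1 := summable_oddTornheim_nat
  have h2 : Summable (fun p : ℕ × ℕ => oddTornheim p.1 (-((p.2 : ℤ) + 1))) := by
    simpa only [Function.comp_def] using summable_oddTornheim.comp_injective hi
  have h3 : ∀ n : ℕ, ∑' m : ℤ, oddTornheim n m =
      ∑' m : ℕ, (oddTornheim n m + oddTornheim n (-((m : ℤ) + 1))) := fun n =>
    (tsum_nat_add_neg_add_one (summable_oddTornheim.prod_factor n)).symm
  rw [tsum_congr h3, ← (h1.add h2).tsum_prod (f := fun p : ℕ × ℕ =>
    oddTornheim p.1 p.2 + oddTornheim p.1 (-((p.2 : ℤ) + 1))), h1.tsum_add h2,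
    tsum_oddTornheim_neg, add_zero]

lemma injective_add_three_mul (n : ℕ) : Function.Injective (fun k : ℤ => (n : ℤ) + 3 * k) := by
  intro a b h
  simp at h
  exact h

lemma oddTornheim_add_three_mul (n : ℕ) (k : ℤ) :
    oddTornheim n (n + 3 * k) = 1 / ((2 * (n : ℝ) + 1) *
      ((2 * n + 1 + 6 * k) * (2 * (2 * n + 1) + 6 * k))) := by
  rw [oddTornheim, if_pos (by omega)]
  push_cast
  ring_nf

lemma summable_oddTornheim_add_three_mul (n : ℕ) :
    Summable (fun k : ℤ => 1 / ((2 * (n : ℝ) + 1 + 6 * k) * (2 * (2 * n + 1) + 6 * k))) := by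
  have h := ((summable_oddTornheim.prod_factor n).comp_injective
    (injective_add_three_mul n)).mul_left (2 * (n : ℝ) + 1)
  refine h.congr fun k => ?_
  have : 2 * (n : ℝ) + 1 ≠ 0 := by positivity
  simp only [Function.comp, oddTornheim_add_three_mul]
  rw [one_div, one_div, mul_inv (2 * (n : ℝ) + 1), mul_inv_cancel_left₀ this]

lemma tsum_oddTornheim_eq (n : ℕ) :
    ∑' m : ℤ, oddTornheim n m = 1 / (2 * (n : ℝ) + 1) *
      ∑' k : ℤ, 1 / ((2 * (n : ℝ) + 1 + 6 * k) * (2 * (2 * n + 1) + 6 * k)) := by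
  rw [← (injective_add_three_mul n).tsum_eq, ← tsum_mul_left]
  · refine tsum_congr fun k => ?_
    rw [oddTornheim_add_three_mul, ← one_div_mul_one_div]
  · intro m hm
    have : ((n : ℤ) - m) % 3 = 0 := by
      by_contra h
      exact hm (by simp [oddTornheim, h])
    exact ⟨-(((n : ℤ) - m) / 3), by simp only; omega⟩

lemma cot_sub_cot_two_mul {t : ℝ} (h : Real.sin (2 * t) ≠ 0) :
    Real.cos t / Real.sin t - Real.cos (2 * t) / Real.sin (2 * t) = 1 / Real.sin (2 * t) := by
  rw [Real.sin_two_mul] at h ⊢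
  have h1 : Real.sin t ≠ 0 := fun h0 => h (by simp [h0])
  have h2 : Real.cos t ≠ 0 := fun h0 => h (by simp [h0])
  rw [Real.cos_two_mul]
  field_simp
  ring

lemma sin_odd_mul_pi_div_three (n : ℕ) :
    Real.sin ((2 * (n : ℝ) + 1) * (π / 3)) = chi3 (2 * n + 1) * (√3 / 2) := by
  obtain ⟨q, r, hr, rfl⟩ : ∃ q r : ℕ, r < 3 ∧ n = 3 * q + r :=
    ⟨n / 3, n % 3, Nat.mod_lt _ (by norm_num), by omega⟩
  have e : (2 * ((3 * q + r : ℕ) : ℝ) + 1) * (π / 3) = (2 * r + 1) * (π / 3) + q * (2 * π) := by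
    push_cast; ring
  rw [e, Real.sin_add_nat_mul_two_pi]
  have e2 : chi3 (2 * (3 * q + r) + 1) = chi3 (2 * r + 1) := by
    unfold chi3
    rw [show (2 * (3 * q + r) + 1) % 3 = (2 * r + 1) % 3 by omega]
  rw [e2]
  interval_cases r
  · simp [chi3]
  · simp [chi3]
    rw [show (2 + 1 : ℝ) * (π / 3) = π by ring, Real.sin_pi]
  · simp [chi3]
    rw [show ((2 : ℝ) * 2 + 1) * (π / 3) = 2 * π - π / 3 by ring, Real.sin_two_pi_sub,
      Real.sin_pi_div_three]

/-- The inner sum, by the residue of `2 * n + 1` modulo three. -/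
lemma tsum_oddTornheim_int (n : ℕ) :
    ∑' m : ℤ, oddTornheim n m = π / (3 * √3) * (chi3 (2 * n + 1) / (2 * (n : ℝ) + 1) ^ 2) +
      if n % 3 = 1 then 1 / (2 * (n : ℝ) + 1) ^ 3 else 0 := by
  have hs := summable_oddTornheim_add_three_mul n
  rw [tsum_oddTornheim_eq]
  have ha : 2 * (n : ℝ) + 1 ≠ 0 := by positivity
  by_cases hn : n % 3 = 1
  · obtain ⟨j, rfl⟩ : ∃ j, n = 3 * j + 1 := ⟨n / 3, by omega⟩
    have hc : chi3 (2 * (3 * j + 1) + 1) = 0 := by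
      unfold chi3
      rw [if_neg (by omega), if_neg (by omega)]
    rw [if_pos hn, hc]
    have e : ∀ k : ℤ, 1 / ((2 * ((3 * j + 1 : ℕ) : ℝ) + 1 + 6 * k) *
        (2 * (2 * ((3 * j + 1 : ℕ) : ℝ) + 1) + 6 * k)) =
        1 / 18 * (1 / ((((2 * j + 1 : ℕ) : ℝ) + 2 * k) * ((2 * j + 1 : ℕ) + k))) := by
      intro k
      rw [one_div_mul_one_div]
      push_cast
      ring_nf
    simp only [e] at hs ⊢
    rw [tsum_mul_left, tsum_int_one_div_odd_mul ⟨j, rfl⟩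
      ((summable_mul_left_iff (by norm_num)).1 hs)]
    have hj : 2 * (j : ℝ) + 1 ≠ 0 := by positivity
    rw [show 2 * ((3 * j + 1 : ℕ) : ℝ) + 1 = 3 * (2 * j + 1) by push_cast; ring]
    push_cast
    field_simp
    norm_num
  · rw [if_neg hn, add_zero]
    have hx : ∀ k : ℤ, (2 * (n : ℝ) + 1) / 6 ≠ k := by
      intro k h
      have : (2 * n + 1 : ℤ) = 6 * k := by
        have : (2 * (n : ℝ) + 1) = 6 * k := by linarith
        exact_mod_cast this
      omega
    have hy : ∀ k : ℤ, (2 * (n : ℝ) + 1) / 3 ≠ k := by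
      intro k h
      have : (2 * n + 1 : ℤ) = 3 * k := by
        have : (2 * (n : ℝ) + 1) = 3 * k := by linarith
        exact_mod_cast this
      omega
    have e : ∀ k : ℤ, 1 / ((2 * (n : ℝ) + 1 + 6 * k) * (2 * (2 * n + 1) + 6 * k)) =
        1 / 36 * (1 / (((2 * (n : ℝ) + 1) / 6 + k) * ((2 * (n : ℝ) + 1) / 3 + k))) := by
      intro k
      rw [one_div_mul_one_div]
      ring_nf
    simp only [e] at hs ⊢
    have h := mul_tsum_int_one_div_mul hx hy ((summable_mul_left_iff (by norm_num)).1 hs)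
    rw [tsum_mul_left]
    have e1 : π * ((2 * (n : ℝ) + 1) / 3) = 2 * (π * ((2 * (n : ℝ) + 1) / 6)) := by ring
    have e2 : 2 * (π * ((2 * (n : ℝ) + 1) / 6)) = (2 * (n : ℝ) + 1) * (π / 3) := by ring
    have hchi : chi3 (2 * n + 1) = 1 ∨ chi3 (2 * n + 1) = -1 := by
      unfold chi3
      split_ifs
      · simp
      · simp
      · omega
    have h3 : √3 ≠ 0 := by positivity
    have hsin : Real.sin (2 * (π * ((2 * (n : ℝ) + 1) / 6))) ≠ 0 := by
      rw [e2, sin_odd_mul_pi_div_three]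
      rcases hchi with h | h <;> rw [h] <;> simp
    rw [e1, ← mul_sub, cot_sub_cot_two_mul hsin, e2, sin_odd_mul_pi_div_three] at h
    have hX : ∑' k : ℤ, 1 / (((2 * (n : ℝ) + 1) / 6 + k) * ((2 * (n : ℝ) + 1) / 3 + k)) =
        π * (1 / (chi3 (2 * n + 1) * (√3 / 2))) * (6 / (2 * (n : ℝ) + 1)) := by
      rw [← h]
      field_simp
      ring_nf
    rw [hX]
    rcases hchi with h | h <;> rw [h] <;> field_simp <;> norm_num

lemma summable_one_div_succ_pow {k : ℕ} (hk : 1 < k) :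
    Summable (fun n : ℕ => 1 / ((n : ℝ) + 1) ^ k) := by
  simpa using (summable_nat_add_iff 1).2 (Real.summable_one_div_nat_pow.2 hk)

lemma abs_chi3_le_one (n : ℕ) : |chi3 n| ≤ 1 := by
  unfold chi3
  split_ifs <;> simp

lemma summable_chi3_div_sq : Summable (fun n : ℕ => chi3 n / (n : ℝ) ^ 2) := by
  refine Summable.of_norm_bounded (Real.summable_one_div_nat_pow.2 one_lt_two) fun n => ?_
  rw [norm_div, Real.norm_eq_abs, Real.norm_of_nonneg (by positivity : (0 : ℝ) ≤ (n : ℝ) ^ 2)]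
  gcongr
  exact abs_chi3_le_one n

lemma chi3_two_mul (n : ℕ) : chi3 (2 * n) = -chi3 n := by
  unfold chi3
  have : n % 3 = 0 ∨ n % 3 = 1 ∨ n % 3 = 2 := by omega
  rcases this with h | h | h
  · rw [show 2 * n % 3 = 0 by omega, h]; simp
  · rw [show 2 * n % 3 = 2 by omega, h]; simp
  · rw [show 2 * n % 3 = 1 by omega, h]; simp

lemma summable_chi3_odd :
    Summable (fun n : ℕ => chi3 (2 * n + 1) / (2 * (n : ℝ) + 1) ^ 2) := by
  have h := summable_chi3_div_sq.comp_injective (i := fun n : ℕ => 2 * n + 1)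
    (fun a b h => by simpa using h)
  simpa [Function.comp_def] using h

lemma tsum_chi3_odd :
    ∑' n : ℕ, chi3 (2 * n + 1) / (2 * (n : ℝ) + 1) ^ 2 =
      5 / 4 * ∑' n : ℕ, chi3 (n + 1) / ((n : ℝ) + 1) ^ 2 := by
  have hs := summable_chi3_div_sq
  have h0 : ∑' n : ℕ, chi3 n / (n : ℝ) ^ 2 = ∑' n : ℕ, chi3 (n + 1) / ((n : ℝ) + 1) ^ 2 := by
    rw [hs.tsum_eq_zero_add]
    simp
  have he : ∀ k : ℕ, chi3 (2 * k) / ((2 * k : ℕ) : ℝ) ^ 2 = -(1 / 4) * (chi3 k / (k : ℝ) ^ 2) := by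
    intro k
    rw [chi3_two_mul]
    push_cast
    ring
  have h1 := tsum_even_add_odd (f := fun n : ℕ => chi3 n / (n : ℝ) ^ 2)
    (by simpa only [he] using hs.mul_left _)
    (by simpa using summable_chi3_odd)
  simp only [he] at h1
  rw [tsum_mul_left, h0] at h1
  push_cast at h1
  linarith

lemma summable_one_div_odd_cube : Summable (fun n : ℕ => 1 / (2 * (n : ℝ) + 1) ^ 3) := by
  have h := (Real.summable_one_div_nat_pow.2 (by norm_num : 1 < 3)).comp_injective
    (i := fun n : ℕ => 2 * n + 1) (fun a b h => by simpa using h)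
  simpa [Function.comp_def] using h

lemma tsum_one_div_odd_cube :
    ∑' n : ℕ, 1 / (2 * (n : ℝ) + 1) ^ 3 = 7 / 8 * ∑' n : ℕ, 1 / ((n : ℝ) + 1) ^ 3 := by
  have hs : Summable (fun n : ℕ => 1 / (n : ℝ) ^ 3) :=
    Real.summable_one_div_nat_pow.2 (by norm_num)
  have h0 : ∑' n : ℕ, 1 / (n : ℝ) ^ 3 = ∑' n : ℕ, 1 / ((n : ℝ) + 1) ^ 3 := by
    rw [hs.tsum_eq_zero_add]
    simp
  have he : ∀ k : ℕ, 1 / ((2 * k : ℕ) : ℝ) ^ 3 = 1 / 8 * (1 / (k : ℝ) ^ 3) := by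
    intro k
    rw [one_div_mul_one_div]
    push_cast
    ring
  have h1 := tsum_even_add_odd (f := fun n : ℕ => 1 / (n : ℝ) ^ 3)
    (by simpa only [he] using hs.mul_left _)
    (by simpa using summable_one_div_odd_cube)
  simp only [he] at h1
  rw [tsum_mul_left, h0] at h1
  push_cast at h1
  linarith

lemma hasSum_one_div_odd_multiple_of_three_cube :
    HasSum (fun n : ℕ => if n % 3 = 1 then 1 / (2 * (n : ℝ) + 1) ^ 3 else 0)
      (1 / 27 * ∑' n : ℕ, 1 / (2 * (n : ℝ) + 1) ^ 3) := by
  have hi : Function.Injective (fun j : ℕ => 3 * j + 1) := fun a b h => by simpa using h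
  rw [← hi.hasSum_iff]
  · refine (summable_one_div_odd_cube.hasSum.mul_left (1 / 27)).congr_fun fun j => ?_
    simp only [Function.comp]
    rw [if_pos (by omega), one_div_mul_one_div]
    push_cast
    ring_nf
  · intro n hn
    rw [if_neg]
    intro h
    exact hn ⟨n / 3, by simp only; omega⟩

/-- The value of the restricted Tornheim series. -/
lemma tsum_oddTornheim_nat_eq :
    ∑' p : ℕ × ℕ, oddTornheim p.1 p.2 = 7 / 216 * (∑' n : ℕ, 1 / ((n : ℝ) + 1) ^ 3) +
      5 * π / (12 * √3) * ∑' n : ℕ, chi3 (n + 1) / ((n : ℝ) + 1) ^ 2 := by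
  rw [tsum_oddTornheim_nat, tsum_congr tsum_oddTornheim_int,
    (summable_chi3_odd.mul_left _).tsum_add hasSum_one_div_odd_multiple_of_three_cube.summable,
    hasSum_one_div_odd_multiple_of_three_cube.tsum_eq, tsum_mul_left, tsum_chi3_odd,
    tsum_one_div_odd_cube]
  have h3 : √3 ≠ 0 := by positivity
  field_simp
  ring

theorem double_series_half_shift_mod_three :
    Summable (fun p : ℕ × ℕ =>
        if p.1 % 3 = p.2 % 3 then
          1 / (((p.2 : ℝ) + 1 / 2) * ((p.1 : ℝ) + (p.2 : ℝ) + 1) ^ 2)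
        else 0) ∧
      (∑' p : ℕ × ℕ,
          if p.1 % 3 = p.2 % 3 then
            1 / (((p.2 : ℝ) + 1 / 2) * ((p.1 : ℝ) + (p.2 : ℝ) + 1) ^ 2)
          else 0)
        = (7 / 54) * (∑' n : ℕ, 1 / ((n : ℝ) + 1) ^ 3)
          + (5 * π / (3 * Real.sqrt 3)) * ∑' n : ℕ, chi3 (n + 1) / ((n : ℝ) + 1) ^ 2 := by
  set f : ℕ × ℕ → ℝ := fun p =>
    if p.1 % 3 = p.2 % 3 then
      1 / (((p.2 : ℝ) + 1 / 2) * ((p.1 : ℝ) + (p.2 : ℝ) + 1) ^ 2)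
    else 0 with hf
  have h_nonneg : ∀ p, 0 ≤ f p := by
    intro p
    simp only [hf]
    split_ifs <;> positivity
  have h_symm : ∀ p, f p + f p.swap = 8 * oddTornheim p.1 p.2 := by
    rintro ⟨m, n⟩
    simp only [hf, Prod.swap, oddTornheim]
    by_cases h : m % 3 = n % 3
    · rw [if_pos h, if_pos h.symm, if_pos (by omega)]
      have h1 : (m : ℝ) + n + 1 ≠ 0 := by positivity
      have h2 : (n : ℝ) + m + 1 ≠ 0 := by positivity
      have h3 : (m : ℝ) + 1 / 2 ≠ 0 := by positivity
      have h4 : (n : ℝ) + 1 / 2 ≠ 0 := by positivity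
      push_cast
      rw [show (2 * (m : ℝ) + 1) * (2 * n + 1) * (2 * m + 2 * n + 2) =
        8 * ((m + 1 / 2) * (n + 1 / 2) * (m + n + 1)) by ring,
        show (n : ℝ) + m + 1 = m + n + 1 by ring]
      field_simp
      ring
    · rw [if_neg h, if_neg (Ne.symm h), if_neg (by omega)]
      simp
  have h_summable : Summable f := by
    refine Summable.of_nonneg_of_le h_nonneg (fun p => ?_) (summable_oddTornheim_nat.mul_left 8)
    rw [← h_symm]
    linarith [h_nonneg p.swap]
  refine ⟨h_summable, ?_⟩
  have h_swap : ∑' p : ℕ × ℕ, f p.swap = ∑' p, f p := (Equiv.prodComm ℕ ℕ).tsum_eq f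
  have h_summable_swap : Summable (fun p : ℕ × ℕ => f p.swap) := by
    simpa only [Function.comp_def, Equiv.prodComm_apply] using
      (Equiv.prodComm ℕ ℕ).summable_iff.2 h_summable
  have h_add : ∑' p : ℕ × ℕ, (f p + f p.swap) = ∑' p, f p + ∑' p : ℕ × ℕ, f p.swap :=
    h_summable.tsum_add h_summable_swap
  rw [tsum_congr h_symm, tsum_mul_left, h_swap, tsum_oddTornheim_nat_eq] at h_add
  have h3 : √3 ≠ 0 := by positivity
  have e : 5 * π / (3 * √3) = 4 * (5 * π / (12 * √3)) := by
    field_simp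
    norm_num
  rw [e]
  linarith
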